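/- Let R be a potential domain, s : (-ℕ)ⁿ → R, and for each i let fᵢ ∈ Ann(s) ∩ R[Xᵢ] with deg fᵢ ≥ 1. Put f = ∏ᵢ fᵢ and dᵢ = gcd(fᵢ, β₀(f,s)/Xᵢ). Then for each i there is a unit uᵢ of R such that uᵢ·fᵢ/dᵢ is the monic generator of Ann(s) ∩ R[Xᵢ]. -/

import Mathlib

noncomputable section

variable {R : Type*}

/-- Right-shift action of a (multivariate) polynomial on a sequence indexed by `(-ℕ)^n`;
the index `a : σ → ℕ` encodes the point `-a`, so `(f ∘ s)_{-b} = ∑ f_a s_{-b-a}`. -/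
def shiftA [CommSemiring R] {σ : Type*} (f : MvPolynomial σ R) (s : (σ → ℕ) → R) :
    (σ → ℕ) → R :=
  fun b => ∑ a ∈ f.support, f.coeff a * s (fun j => b j + a j)

/-- The generating function `Γ(s) = ∑_{c ≤ 0} s_c X^c`, as a coefficient function on `ℤ^n`. -/
def GammaZ [Zero R] {n : ℕ} (s : (Fin n → ℕ) → R) : (Fin n → ℤ) → R :=
  fun c => if ∀ i, c i ≤ 0 then s (fun i => (-(c i)).toNat) else 0

/-- Coefficient function of the product `f · G` in the Laurent series ring
`R((X₁⁻¹, …, Xₙ⁻¹))`. -/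
def polyMulG [CommSemiring R] {n : ℕ} (f : MvPolynomial (Fin n) R) (G : (Fin n → ℤ) → R) :
    (Fin n → ℤ) → R :=
  fun c => ∑ a ∈ f.support, f.coeff a * G (fun i => c i - (a i : ℤ))

/-- Vector of partial degrees `δᵢ f`. -/
def degV [CommSemiring R] {n : ℕ} (f : MvPolynomial (Fin n) R) : Fin n → ℕ :=
  fun i => f.support.sup fun a => a i

/-- `degV` as a finitely supported function. -/
def degE [CommSemiring R] {n : ℕ} (f : MvPolynomial (Fin n) R) : Fin n →₀ ℕ :=
  Finsupp.equivFunOnFinite.symm (degV f)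

/-- Embedding of `R[Xᵢ]` into `R[X₁,…,Xₙ]`. -/
def embedP [CommSemiring R] {n : ℕ} (i : Fin n) (p : Polynomial R) : MvPolynomial (Fin n) R :=
  Polynomial.eval₂ MvPolynomial.C (MvPolynomial.X i) p

def toExp {n : ℕ} (c : Fin n → ℤ) : Fin n →₀ ℕ :=
  Finsupp.equivFunOnFinite.symm fun i => (c i).toNat

/-- The coefficient function on `ℤ^n` of a polynomial. -/
def toCoeffZ [CommSemiring R] {n : ℕ} (g : MvPolynomial (Fin n) R) : (Fin n → ℤ) → R :=
  fun c => if ∀ i, 0 ≤ c i then g.coeff (toExp c) else 0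

def oneExp {n : ℕ} : Fin n →₀ ℕ := Finsupp.equivFunOnFinite.symm 1

/-- The border polynomial `β₀(f,s) = (f·Γ(s)) | [1, deg f]`. -/
def mvBeta0 [CommRing R] {n : ℕ} (f : MvPolynomial (Fin n) R) (s : (Fin n → ℕ) → R) :
    MvPolynomial (Fin n) R :=
  ∑ c ∈ Finset.Icc oneExp (degE f),
    MvPolynomial.monomial c (polyMulG f (GammaZ s) fun i => (c i : ℤ))

/-- `β₀(f,s) / (X₁⋯Xₙ)`. -/
def mvBeta0Div [CommRing R] {n : ℕ} (f : MvPolynomial (Fin n) R) (s : (Fin n → ℕ) → R) :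
    MvPolynomial (Fin n) R :=
  ∑ c ∈ Finset.Icc oneExp (degE f),
    MvPolynomial.monomial (c - oneExp) (polyMulG f (GammaZ s) fun i => (c i : ℤ))

/-- `β₀(f,s) / Xᵢ`. -/
def mvBeta0DivXi [CommRing R] {n : ℕ} (i : Fin n) (f : MvPolynomial (Fin n) R)
    (s : (Fin n → ℕ) → R) : MvPolynomial (Fin n) R :=
  ∑ c ∈ Finset.Icc oneExp (degE f),
    MvPolynomial.monomial (c - Finsupp.single i 1) (polyMulG f (GammaZ s) fun i => (c i : ℤ))

/-- Generalized Newton divided difference `ν^a f = (f | [a, deg f]) / X^a`. -/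
def nuA [CommRing R] {n : ℕ} (a : Fin n →₀ ℕ) (f : MvPolynomial (Fin n) R) :
    MvPolynomial (Fin n) R :=
  ∑ b ∈ Finset.Icc a (degE f), MvPolynomial.monomial (b - a) (f.coeff b)

/-
Let `h = ∏_{j ≠ i} fⱼ`. If `p, r ∈ R[Xᵢ]` annihilate `s`, then `(ph) · Γ(s)` and `(rh) · Γ(s)`
are the polynomials `β₀(ph, s)` and `β₀(rh, s)`, hence `p · β₀(rh, s) = r · β₀(ph, s)`. For
`r = fᵢ` this says that `fᵢ ∣ p · β₀(f, s)/Xᵢ`, so `q = fᵢ/dᵢ` divides `p`. Conversely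
`q · h · Γ(s)` is a polynomial divisible by `Xᵢ`; the factors of `h` involve only the other
variables and can be cancelled on the half-space where the exponent of `Xᵢ` is at most `0`, so `q`
annihilates `s`. Thus `q` generates `Ann(s) ∩ R[Xᵢ]`.

That the leading coefficient of `q` is a unit is a form of Fatou's lemma. Suppose a prime `π`
divides it, and let `e < deg q` be the largest index with `π ∤ qₑ`. As no nonzero polynomial of
degree at most `e` annihilates `s`, some linear combination `μ` of the one-variable sections of `s`
has `μ₀ = ⋯ = μₑ₋₁ = 0` and `μₑ ≠ 0`. Solving the recurrence for the term with coefficient `qₑ`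
shows that `π` divides every `μₖ`, and dividing by `π` repeatedly shows that every power of `π`
divides `μₑ`, a contradiction.
-/

open Polynomial

section Translation

variable {A : Type*} [AddCommMonoid A]

variable (R) in
/-- The translation operator `s ↦ s (· + v)` on `R`-valued functions. A function `s` satisfies the
linear recurrence in direction `v` with characteristic polynomial `p` if
`aeval (shiftEnd R v) p s = 0`. -/
def shiftEnd [Semiring R] (v : A) : Module.End R (A → R) :=
  LinearMap.funLeft R R (· + v)

theorem shiftEnd_apply [Semiring R] (v : A) (s : A → R) (b : A) :
    shiftEnd R v s b = s (b + v) :=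
  rfl

theorem shiftEnd_pow_apply [Semiring R] (v : A) (k : ℕ) (s : A → R) (b : A) :
    (shiftEnd R v ^ k) s b = s (b + k • v) := by
  induction k generalizing b with
  | zero => simp
  | succ k ih =>
    rw [pow_succ', Module.End.mul_apply, shiftEnd_apply, ih, add_assoc, succ_nsmul']

theorem aeval_shiftEnd_apply [CommSemiring R] (v : A) (p : R[X]) (s : A → R) (b : A) :
    aeval (shiftEnd R v) p s b = p.sum fun k a => a * s (b + k • v) := by
  rw [aeval_eq_sum_range, sum_over_range _ (by simp)]
  simp [shiftEnd_pow_apply]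

end Translation

section Fatou

theorem exists_smul_mem_span_of_forall_dotProduct [CommRing R] [IsDomain R] {ι : Type*} [Fintype ι]
    {S : Set (ι → R)} (hS : ∀ w : ι → R, (∀ x ∈ S, w ⬝ᵥ x = 0) → w = 0) (y : ι → R) :
    ∃ r : R, r ≠ 0 ∧ r • y ∈ Submodule.span R S := by
  classical
  let K := FractionRing R
  let φ : (ι → R) →ₗ[R] (ι → K) := (Algebra.linearMap R K).compLeft ι
  have hφ : Function.Injective φ := (IsFractionRing.injective R K).comp_left
  by_cases hy : φ y ∈ Submodule.span K (φ '' S)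
  · obtain ⟨r, hr⟩ := multiple_mem_span_of_mem_localization_span (nonZeroDivisors R) K _ _ hy
    rw [Submonoid.smul_def, ← map_smul, Submodule.span_image] at hr
    exact ⟨r, nonZeroDivisors.ne_zero r.2, hφ.mem_set_image.1 hr⟩
  · obtain ⟨g, hgy, hg⟩ := Submodule.exists_le_ker_of_notMem hy
    obtain ⟨c, rfl⟩ := (dotProductEquiv K ι).surjective g
    obtain ⟨r, hr⟩ := IsLocalization.exist_integer_multiples_of_finite (nonZeroDivisors R) c
    choose w hw using hr
    have map_dotProduct (x : ι → R) : algebraMap R K (w ⬝ᵥ x) = (r : R) • (c ⬝ᵥ φ x) := by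
      rw [RingHom.map_dotProduct, ← smul_dotProduct]
      congr 1
      exact funext hw
    have hw0 : w = 0 := hS w fun x hx => IsFractionRing.injective R K <| by
      rw [map_dotProduct, map_zero, smul_eq_zero]
      exact .inr (hg (Submodule.subset_span ⟨x, hx, rfl⟩))
    have hry := map_dotProduct y
    rw [hw0, zero_dotProduct, map_zero, eq_comm, smul_eq_zero] at hry
    exact absurd hry (not_or.2 ⟨nonZeroDivisors.ne_zero r.2, hgy⟩)

variable [CommRing R]

theorem prime_dvd_of_aeval_shiftEnd_eq_zero {π : R} (hπ : Prime π) {q : R[X]} {e : ℕ}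
    (he : ¬π ∣ q.coeff e) (he' : ∀ j, e < j → π ∣ q.coeff j) {μ : ℕ → R}
    (hμ : aeval (shiftEnd R 1) q μ = 0) (h0 : ∀ j < e, μ j = 0) (k : ℕ) : π ∣ μ k := by
  induction k using Nat.strong_induction_on with
  | _ k ih =>
    rcases lt_or_ge k e with hke | hek
    · simp [h0 k hke]
    · obtain ⟨m, rfl⟩ := Nat.exists_eq_add_of_le' hek
      have hes : e ∈ q.support := mem_support_iff.2 fun h => he (h ▸ dvd_zero π)
      have hm := congrFun hμ m
      rw [aeval_shiftEnd_apply, Polynomial.sum, ← Finset.add_sum_erase _ _ hes] at hm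
      simp only [smul_eq_mul, mul_one, Pi.zero_apply] at hm
      have hrest : π ∣ ∑ j ∈ q.support.erase e, q.coeff j * μ (m + j) := by
        refine Finset.dvd_sum fun j hj => ?_
        rcases lt_or_gt_of_ne (Finset.ne_of_mem_erase hj) with h | h
        · exact (ih _ (by lia)).mul_left _
        · exact (he' _ h).mul_right _
      have htop : π ∣ q.coeff e * μ (m + e) := by
        rw [eq_neg_of_add_eq_zero_left hm]
        exact hrest.neg_right
      exact (hπ.dvd_or_dvd htop).resolve_left he

theorem prime_pow_dvd_of_aeval_shiftEnd_eq_zero [IsDomain R] {π : R} (hπ : Prime π) {q : R[X]}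
    {e : ℕ} (he : ¬π ∣ q.coeff e) (he' : ∀ j, e < j → π ∣ q.coeff j) (n : ℕ) {μ : ℕ → R}
    (hμ : aeval (shiftEnd R 1) q μ = 0) (h0 : ∀ j < e, μ j = 0) : π ^ n ∣ μ e := by
  induction n generalizing μ with
  | zero => simp
  | succ n ih =>
    choose ν hν using prime_dvd_of_aeval_shiftEnd_eq_zero hπ he he' hμ h0
    obtain rfl : μ = π • ν := funext hν
    rw [map_smul, smul_eq_zero_iff_right hπ.ne_zero] at hμ
    rw [pow_succ']
    exact mul_dvd_mul_left π (ih hμ fun j hj => (mul_eq_zero_iff_left hπ.ne_zero).1 (h0 j hj))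

variable {A : Type*} [AddCommMonoid A] {v : A} {s : A → R} {q : R[X]}

theorem exists_first_nonzero_of_aeval_shiftEnd_eq_zero [IsDomain R]
    (hq : aeval (shiftEnd R v) q s = 0) {e : ℕ}
    (he : ∀ p : R[X], p.natDegree ≤ e → aeval (shiftEnd R v) p s = 0 → p = 0) :
    ∃ μ : ℕ → R, aeval (shiftEnd R 1) q μ = 0 ∧ (∀ j < e, μ j = 0) ∧ μ e ≠ 0 := by
  classical
  let T : Set (ℕ → R) := Set.range fun b k => s (b + k • v)
  let ρ : (ℕ → R) →ₗ[R] (Fin (e + 1) → R) := LinearMap.funLeft R R Fin.val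
  have annihilates : Submodule.span R T ≤ LinearMap.ker (aeval (shiftEnd R 1) q) := by
    rw [Submodule.span_le]
    rintro _ ⟨b, rfl⟩
    funext m
    simpa only [aeval_shiftEnd_apply, add_smul, smul_eq_mul, mul_one, add_assoc, Pi.zero_apply]
      using congrFun hq (b + m • v)
  have separates : ∀ w : Fin (e + 1) → R, (∀ x ∈ ρ '' T, w ⬝ᵥ x = 0) → w = 0 := by
    intro w hw
    have hp : ofFn (e + 1) w = 0 := by
      refine he _ (Nat.lt_succ_iff.1 (ofFn_natDegree_lt e.succ_pos w)) (funext fun b => ?_)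
      rw [aeval_shiftEnd_apply, sum_over_range' _ _ _ (ofFn_natDegree_lt e.succ_pos w),
        Finset.sum_range, Pi.zero_apply, ← hw _ ⟨_, ⟨b, rfl⟩, rfl⟩]
      · exact Finset.sum_congr rfl fun j _ => by
          rw [ofFn_coeff_eq_val_of_lt w j.2]
          rfl
      · simp
    exact (map_eq_zero_iff _ (injective_ofFn _)).1 hp
  obtain ⟨r, hr0, hr⟩ := exists_smul_mem_span_of_forall_dotProduct separates
    (Pi.single (Fin.last e) 1)
  rw [Submodule.span_image] at hr
  obtain ⟨μ, hμT, hμ⟩ := hr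
  refine ⟨μ, annihilates hμT, fun j hj => ?_, ?_⟩
  · have := congrFun hμ ⟨j, by lia⟩
    simpa [ρ, Pi.single_apply, Fin.ext_iff, hj.ne] using this
  · have := congrFun hμ (Fin.last e)
    simpa [ρ] using this.trans_ne (by simpa using hr0)

theorem not_C_dvd_of_aeval_shiftEnd_eq_zero_iff_dvd [IsDomain R] (hq0 : q ≠ 0)
    (hq : ∀ p : R[X], aeval (shiftEnd R v) p s = 0 ↔ q ∣ p) {r : R} (hr0 : r ≠ 0)
    (hr : ¬IsUnit r) : ¬C r ∣ q := by
  rintro ⟨q', rfl⟩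
  have hq' : aeval (shiftEnd R v) q' s = 0 := by
    have := (hq _).2 dvd_rfl
    rwa [map_mul, aeval_C, Module.End.mul_apply, Module.algebraMap_end_apply,
      smul_eq_zero_iff_right hr0] at this
  have hdvd : C r * q' ∣ 1 * q' := by simpa using (hq q').1 hq'
  rw [mul_dvd_mul_iff_right (right_ne_zero_of_mul hq0)] at hdvd
  exact hr (isUnit_C.1 (isUnit_of_dvd_one hdvd))

theorem exists_coeff_not_dvd_and_forall_gt_dvd {r : R} {q : R[X]} (h : ¬C r ∣ q) :
    ∃ e, ¬r ∣ q.coeff e ∧ ∀ j, e < j → r ∣ q.coeff j := by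
  classical
  rw [C_dvd_iff_dvd_coeff, not_forall] at h
  obtain ⟨j, hj⟩ := h
  have le_natDegree : ∀ k, ¬r ∣ q.coeff k → k ≤ q.natDegree := fun k hk =>
    le_natDegree_of_ne_zero fun h0 => hk (h0 ▸ dvd_zero r)
  refine ⟨Nat.findGreatest (fun k => ¬r ∣ q.coeff k) q.natDegree,
    Nat.findGreatest_spec (P := fun k => ¬r ∣ q.coeff k) (le_natDegree j hj) hj, fun k hk => ?_⟩
  by_contra hkr
  exact Nat.findGreatest_is_greatest hk (le_natDegree k hkr) hkr

theorem isUnit_leadingCoeff_of_aeval_shiftEnd_eq_zero_iff_dvd [IsDomain R]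
    [UniqueFactorizationMonoid R] (hq0 : q ≠ 0)
    (hq : ∀ p : R[X], aeval (shiftEnd R v) p s = 0 ↔ q ∣ p) : IsUnit q.leadingCoeff := by
  by_contra hu
  obtain ⟨π, hirr, hπq⟩ := WfDvdMonoid.exists_irreducible_factor hu (leadingCoeff_ne_zero.2 hq0)
  have hπ := hirr.prime
  obtain ⟨e, he, he'⟩ := exists_coeff_not_dvd_and_forall_gt_dvd
    (not_C_dvd_of_aeval_shiftEnd_eq_zero_iff_dvd hq0 hq hπ.ne_zero hπ.not_isUnit)
  have hlt : e < q.natDegree :=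
    lt_of_le_of_ne (le_natDegree_of_ne_zero fun h0 => he (h0 ▸ dvd_zero π)) fun h => he (h ▸ hπq)
  obtain ⟨μ, hμ, hμ0, hμe⟩ := exists_first_nonzero_of_aeval_shiftEnd_eq_zero ((hq q).2 dvd_rfl)
    fun p hp hps => eq_zero_of_dvd_of_natDegree_lt ((hq p).1 hps) (hp.trans_lt hlt)
  obtain ⟨n, hn⟩ := FiniteMultiplicity.of_not_isUnit hπ.not_isUnit hμe
  exact hn (prime_pow_dvd_of_aeval_shiftEnd_eq_zero hπ he he' (n + 1) hμ hμ0)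

end Fatou

section UnivariateSubring

variable {n : ℕ}

theorem embedP_eq_aeval [CommSemiring R] (i : Fin n) (p : R[X]) :
    embedP i p = aeval (MvPolynomial.X i) p :=
  rfl

theorem embedP_mul [CommSemiring R] (i : Fin n) (p q : R[X]) :
    embedP i (p * q) = embedP i p * embedP i q :=
  map_mul (aeval (MvPolynomial.X i : MvPolynomial (Fin n) R)) p q

theorem embedP_C_mul [CommSemiring R] (i : Fin n) (r : R) (p : R[X]) :
    embedP i (C r * p) = MvPolynomial.C r * embedP i p := by
  rw [embedP_mul, embedP, eval₂_C]

theorem aeval_X_embedP [CommSemiring R] (i : Fin n) (p : R[X]) :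
    MvPolynomial.aeval (fun _ => (X : R[X])) (embedP i p) = p := by
  rw [embedP_eq_aeval, ← aeval_algHom_apply, MvPolynomial.aeval_X, aeval_X_left_apply]

theorem embedP_injective [CommSemiring R] (i : Fin n) :
    Function.Injective (embedP i : R[X] → MvPolynomial (Fin n) R) :=
  Function.LeftInverse.injective (aeval_X_embedP i)

theorem embedP_ne_zero [CommSemiring R] (i : Fin n) {p : R[X]} (hp : p ≠ 0) : embedP i p ≠ 0 :=
  (map_ne_zero_iff (aeval (MvPolynomial.X i : MvPolynomial (Fin n) R)) (embedP_injective i)).2 hp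

theorem embedP_dvd_embedP_iff [CommSemiring R] (i : Fin n) {p q : R[X]} :
    embedP i p ∣ embedP i q ↔ p ∣ q := by
  refine ⟨fun h => ?_, map_dvd (aeval (MvPolynomial.X i : MvPolynomial (Fin n) R))⟩
  simpa only [aeval_X_embedP] using
    map_dvd (MvPolynomial.aeval (R := R) fun _ : Fin n => (X : R[X])) h

theorem mem_range_embedP_iff [CommSemiring R] {i : Fin n} {q : MvPolynomial (Fin n) R} :
    q ∈ Set.range (embedP i) ↔ q ∈ MvPolynomial.supported R {i} := by
  rw [MvPolynomial.supported_eq_adjoin_X, Set.image_singleton,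
    Algebra.adjoin_singleton_eq_range_aeval]
  rfl

theorem vars_subset_of_dvd {σ : Type*} [CommSemiring R] [NoZeroDivisors R]
    {p q : MvPolynomial σ R} (hp : p ≠ 0) (h : q ∣ p) : q.vars ⊆ p.vars := by
  classical
  obtain ⟨r, rfl⟩ := h
  intro j
  rw [MvPolynomial.mem_vars_iff_degreeOf_ne_zero, MvPolynomial.mem_vars_iff_degreeOf_ne_zero,
    MvPolynomial.degreeOf_mul_eq (left_ne_zero_of_mul hp) (right_ne_zero_of_mul hp)]
  lia

theorem exists_embedP_eq_of_dvd [CommSemiring R] [NoZeroDivisors R] {i : Fin n} {p : R[X]}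
    (hp : p ≠ 0) {q : MvPolynomial (Fin n) R} (h : q ∣ embedP i p) :
    ∃ r : R[X], embedP i r = q := by
  have hpi := mem_range_embedP_iff.1 (Set.mem_range_self (f := embedP i) p)
  rw [MvPolynomial.mem_supported] at hpi
  refine mem_range_embedP_iff.2 (MvPolynomial.mem_supported.2 fun j hj => hpi ?_)
  exact vars_subset_of_dvd (embedP_ne_zero i hp) h hj

end UnivariateSubring

section ShiftAction

variable [CommSemiring R] {σ A : Type*} [AddCommMonoid A]

/-- The action of polynomials on `R`-valued functions on `A` in which the monomial `X ^ a` shifts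
by `ψ a`. It covers both the right-shift action on sequences (`ψ a = a`) and the product with a
Laurent series given by its coefficient function (`ψ a = -a`). -/
def shiftAction (ψ : (σ →₀ ℕ) →+ A) : MvPolynomial σ R →ₐ[R] Module.End R (A → R) :=
  AddMonoidAlgebra.lift R _ _
    { toFun := fun a => shiftEnd R (ψ a.toAdd)
      map_one' := by ext; simp [shiftEnd_apply]
      map_mul' := fun a b => by ext; simp [shiftEnd_apply, add_assoc] }

theorem shiftAction_apply (ψ : (σ →₀ ℕ) →+ A) (f : MvPolynomial σ R) (s : A → R) (b : A) :
    shiftAction ψ f s b = ∑ a ∈ f.support, f.coeff a * s (b + ψ a) := by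
  rw [shiftAction, AddMonoidAlgebra.lift_apply, Finsupp.sum, LinearMap.sum_apply,
    Finset.sum_apply]
  rfl

theorem shiftAction_X (ψ : (σ →₀ ℕ) →+ A) (i : σ) :
    shiftAction ψ (MvPolynomial.X i) = shiftEnd R (ψ (Finsupp.single i 1)) := by
  simp [shiftAction, MvPolynomial.X, MvPolynomial.monomial]

theorem shiftAction_embedP {n : ℕ} (ψ : (Fin n →₀ ℕ) →+ A) (i : Fin n) (p : R[X]) :
    shiftAction ψ (embedP i p) = aeval (shiftEnd R (ψ (Finsupp.single i 1))) p := by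
  rw [embedP_eq_aeval, ← aeval_algHom_apply, shiftAction_X]

end ShiftAction

section Laurent

variable {n : ℕ}

/-- The homomorphism `a ↦ -a` from exponents of polynomials to exponents of Laurent series. -/
def negExp : (Fin n →₀ ℕ) →+ (Fin n → ℤ) where
  toFun a i := -(a i : ℤ)
  map_zero' := by ext; simp
  map_add' a b := by ext; simp [add_comm]

theorem negExp_apply (a : Fin n →₀ ℕ) (i : Fin n) : negExp a i = -(a i : ℤ) :=
  rfl

theorem negExp_single_one (i : Fin n) : negExp (Finsupp.single i 1) = -Pi.single i 1 := by
  ext j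
  rw [negExp_apply, Finsupp.single_apply, Pi.neg_apply, Pi.single_apply]
  split_ifs with h₁ h₂ h₂ <;> simp_all

section CommSemiring

variable [CommSemiring R]

/-- Multiplication of Laurent series in `X₁⁻¹, …, Xₙ⁻¹`, given by their coefficient functions, by
polynomials; this is `polyMulG` as an algebra homomorphism into the linear endomorphisms. -/
def laurentMul : MvPolynomial (Fin n) R →ₐ[R] Module.End R ((Fin n → ℤ) → R) :=
  shiftAction negExp

theorem laurentMul_eq_polyMulG (f : MvPolynomial (Fin n) R) (G : (Fin n → ℤ) → R) :
    laurentMul f G = polyMulG f G :=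
  funext (shiftAction_apply negExp f G)

theorem laurentMul_embedP (i : Fin n) (p : R[X]) :
    laurentMul (embedP i p) = aeval (shiftEnd R (-Pi.single i 1)) p := by
  rw [laurentMul, shiftAction_embedP, negExp_single_one]

theorem laurentMul_apply_eq_zero_of_forall_le {f : MvPolynomial (Fin n) R} {G : (Fin n → ℤ) → R}
    {c : Fin n → ℤ} (h : ∀ c' ≤ c, G c' = 0) : laurentMul f G c = 0 := by
  rw [laurentMul_eq_polyMulG]
  exact Finset.sum_eq_zero fun a _ => by rw [h _ fun i => by lia, mul_zero]

theorem support_laurentMul_subset (f : MvPolynomial (Fin n) R) {G : (Fin n → ℤ) → R}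
    {N : Fin n → ℤ} (hG : Function.support G ⊆ Set.Iic N) :
    Function.support (laurentMul f G) ⊆ Set.Iic fun i => N i + degV f i := by
  intro c hc i
  rw [Function.mem_support, laurentMul_eq_polyMulG] at hc
  obtain ⟨a, ha, hne⟩ := Finset.exists_ne_zero_of_sum_ne_zero hc
  have hN : c i - a i ≤ N i := hG (right_ne_zero_of_mul hne) i
  have hdeg : a i ≤ degV f i := Finset.le_sup (f := fun a => a i) ha
  lia

theorem bddAbove_support_laurentMul (f : MvPolynomial (Fin n) R) {G : (Fin n → ℤ) → R}
    (hG : BddAbove (Function.support G)) : BddAbove (Function.support (laurentMul f G)) :=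
  let ⟨_, hN⟩ := hG
  ⟨_, support_laurentMul_subset f hN⟩

theorem support_GammaZ_subset (s : (Fin n → ℕ) → R) :
    Function.support (GammaZ s) ⊆ Set.Iic 0 := fun _ hc => by
  by_contra h
  exact hc (if_neg h)

theorem shiftA_eq_shiftAction (f : MvPolynomial (Fin n) R) (s : (Fin n → ℕ) → R) :
    shiftA f s = shiftAction Finsupp.coeFnAddHom f s :=
  (funext (shiftAction_apply Finsupp.coeFnAddHom f s)).symm

theorem shiftA_embedP (i : Fin n) (p : R[X]) (s : (Fin n → ℕ) → R) :
    shiftA (embedP i p) s = aeval (shiftEnd R (Pi.single i 1)) p s := by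
  rw [shiftA_eq_shiftAction, shiftAction_embedP, ← Finsupp.single_eq_pi_single]
  rfl

theorem laurentMul_GammaZ_neg (f : MvPolynomial (Fin n) R) (s : (Fin n → ℕ) → R)
    (b : Fin n → ℕ) : laurentMul f (GammaZ s) (fun i => -(b i : ℤ)) = shiftA f s b := by
  rw [laurentMul_eq_polyMulG]
  refine Finset.sum_congr rfl fun a _ => ?_
  rw [GammaZ, if_pos fun i => by lia]
  congr 2
  ext i
  lia

theorem shiftA_embedP_eq_zero_iff {i : Fin n} {p : R[X]} {s : (Fin n → ℕ) → R} :
    shiftA (embedP i p) s = 0 ↔ ∀ c, c i ≤ 0 → laurentMul (embedP i p) (GammaZ s) c = 0 := by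
  refine ⟨fun h c hci => ?_, fun h => funext fun b => ?_⟩
  · by_cases hc : ∀ j, c j ≤ 0
    · have hneg : c = fun j => -((-c j).toNat : ℤ) := funext fun j => by grind
      rw [hneg, laurentMul_GammaZ_neg, h, Pi.zero_apply]
    · obtain ⟨j, hj⟩ := not_forall.1 hc
      have hij : j ≠ i := fun h => hj (h ▸ hci)
      rw [laurentMul_embedP, aeval_shiftEnd_apply]
      refine Finset.sum_eq_zero fun k _ => ?_
      refine mul_eq_zero_of_right _ (Function.notMem_support.1 fun hk => hj ?_)
      simpa [hij] using support_GammaZ_subset s hk j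
  · rw [← laurentMul_GammaZ_neg, h _ (by simp), Pi.zero_apply]

end CommSemiring

section Cancellation

theorem eq_zero_of_aeval_shiftEnd_neg_eq_zero [CommSemiring R] [NoZeroDivisors R] {A : Type*}
    [AddCommGroup A] {p : R[X]} (hp : p ≠ 0) {G : A → R} {c v : A} {N : ℤ}
    (hN : ∀ k : ℤ, N < k → G (c + k • v) = 0)
    (h : ∀ k : ℤ, aeval (shiftEnd R (-v)) p G (c + k • v) = 0) : G c = 0 := by
  by_contra hc
  obtain ⟨m, hm, hmax⟩ := Int.exists_greatest_of_bdd (P := fun k => G (c + k • v) ≠ 0)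
    ⟨N, fun k hk => not_lt.1 fun hlt => hk (hN k hlt)⟩ ⟨0, by simpa using hc⟩
  refine mul_ne_zero (leadingCoeff_ne_zero.2 hp) hm ?_
  have htop := h (m + p.natDegree)
  have index_eq (k : ℕ) : c + (m + p.natDegree) • v + k • -v = c + (m + p.natDegree - k) • v := by
    module
  simp only [aeval_shiftEnd_apply, index_eq] at htop
  rw [Polynomial.sum, Finset.sum_eq_single p.natDegree] at htop
  · simpa using htop
  · intro k hk hkp
    have hlt : k < p.natDegree := lt_of_le_of_ne (le_natDegree_of_mem_supp k hk) hkp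
    rw [not_not.1 fun hne => absurd (hmax (m + p.natDegree - k) hne) (by lia), mul_zero]
  · simp +contextual

theorem eq_zero_of_laurentMul_embedP_eq_zero [CommSemiring R] [NoZeroDivisors R] {i : Fin n}
    {p : R[X]} (hp : p ≠ 0) {G : (Fin n → ℤ) → R} (hG : BddAbove (Function.support G))
    {c : Fin n → ℤ} (h : ∀ k : ℤ, laurentMul (embedP i p) G (c + k • Pi.single i 1) = 0) :
    G c = 0 := by
  obtain ⟨N, hN⟩ := hG
  rw [laurentMul_embedP] at h
  refine eq_zero_of_aeval_shiftEnd_neg_eq_zero hp (N := N i - c i) (fun k hk => ?_) h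
  refine Function.notMem_support.1 fun hmem => ?_
  have := hN hmem i
  simp only [Pi.add_apply, Pi.smul_apply, Pi.single_eq_same, smul_eq_mul, mul_one] at this
  lia

theorem injOn_laurentMul_embedP [CommRing R] [NoZeroDivisors R] (i : Fin n) {p : R[X]}
    (hp : p ≠ 0) :
    Set.InjOn (laurentMul (embedP i p)) {G | BddAbove (Function.support G)} := by
  intro G hG G' hG' h
  have hsub : BddAbove (Function.support (G - G')) :=
    .mono (Function.support_sub G G') (hG.union hG')
  refine sub_eq_zero.1 (funext fun c => ?_)
  refine eq_zero_of_laurentMul_embedP_eq_zero (i := i) hp hsub fun k => ?_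
  rw [map_sub, h, sub_self, Pi.zero_apply]

theorem eq_zero_of_laurentMul_prod_embedP_eq_zero [CommSemiring R] [NoZeroDivisors R]
    {i : Fin n} {S : Finset (Fin n)} (hi : i ∉ S) {f : Fin n → R[X]} (hf : ∀ j ∈ S, f j ≠ 0)
    {G : (Fin n → ℤ) → R} (hG : BddAbove (Function.support G)) {N : ℤ}
    (h : ∀ c, c i ≤ N → laurentMul (∏ j ∈ S, embedP j (f j)) G c = 0) {c : Fin n → ℤ}
    (hc : c i ≤ N) : G c = 0 := by
  classical
  induction S using Finset.induction_on generalizing c with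
  | empty => simpa using h c hc
  | insert j S hj ih =>
    have hij : i ≠ j := fun h => hi (h ▸ Finset.mem_insert_self j S)
    refine ih (fun hS => hi (Finset.mem_insert_of_mem hS))
      (fun k hk => hf k (Finset.mem_insert_of_mem hk)) (fun c hc => ?_) hc
    refine eq_zero_of_laurentMul_embedP_eq_zero (i := j) (hf j (Finset.mem_insert_self j S))
      (bddAbove_support_laurentMul _ hG) fun k => ?_
    rw [← Module.End.mul_apply, ← map_mul,
      ← Finset.prod_insert (f := fun j => embedP j (f j)) hj]
    exact h _ (by simpa [hij] using hc)

end Cancellation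

section Coefficients

theorem exists_natCast_eq_of_nonneg {c : Fin n → ℤ} (hc : 0 ≤ c) :
    ∃ a : Fin n →₀ ℕ, (fun i => (a i : ℤ)) = c :=
  ⟨toExp c, funext fun i => Int.toNat_of_nonneg (hc i)⟩

variable [CommSemiring R]

theorem toCoeffZ_natCast (g : MvPolynomial (Fin n) R) (a : Fin n →₀ ℕ) :
    toCoeffZ g (fun i => (a i : ℤ)) = g.coeff a := by
  rw [toCoeffZ, if_pos fun i => Int.natCast_nonneg _]
  congr 1
  ext i
  exact Int.toNat_natCast (a i)

theorem toCoeffZ_injective :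
    Function.Injective (toCoeffZ : MvPolynomial (Fin n) R → (Fin n → ℤ) → R) := fun g h hgh => by
  ext a
  rw [← toCoeffZ_natCast, hgh, toCoeffZ_natCast]

theorem toCoeffZ_of_not_nonneg (g : MvPolynomial (Fin n) R) {c : Fin n → ℤ} (hc : ¬0 ≤ c) :
    toCoeffZ g c = 0 :=
  if_neg hc

theorem toCoeffZ_eq_laurentMul (g : MvPolynomial (Fin n) R) :
    toCoeffZ g = laurentMul g (Pi.single 0 1) := by
  funext c
  have sub_eq_zero_iff (a : Fin n →₀ ℕ) :
      (fun i => c i - (a i : ℤ)) = 0 ↔ c = fun i => (a i : ℤ) := sub_eq_zero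
  simp only [laurentMul_eq_polyMulG, polyMulG, Pi.single_apply, sub_eq_zero_iff]
  by_cases hc : 0 ≤ c
  · obtain ⟨a, rfl⟩ := exists_natCast_eq_of_nonneg hc
    simp [toCoeffZ_natCast, funext_iff, ← DFunLike.ext_iff]
  · rw [toCoeffZ_of_not_nonneg g hc, Finset.sum_eq_zero]
    exact fun a _ => by rw [if_neg fun h => hc fun i => by simp [h], mul_zero]

theorem toCoeffZ_mul (f g : MvPolynomial (Fin n) R) :
    toCoeffZ (f * g) = laurentMul f (toCoeffZ g) := by
  rw [toCoeffZ_eq_laurentMul, map_mul, Module.End.mul_apply, ← toCoeffZ_eq_laurentMul]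

theorem bddAbove_support_toCoeffZ (g : MvPolynomial (Fin n) R) :
    BddAbove (Function.support (toCoeffZ g)) := by
  rw [toCoeffZ_eq_laurentMul]
  exact bddAbove_support_laurentMul g ((Set.finite_singleton 0).subset
    (Pi.support_single_subset)).bddAbove

theorem toCoeffZ_X_mul_eq_zero {i : Fin n} (g : MvPolynomial (Fin n) R) {c : Fin n → ℤ}
    (hc : c i ≤ 0) : toCoeffZ (MvPolynomial.X i * g) c = 0 := by
  rw [toCoeffZ_mul, laurentMul, shiftAction_X, shiftEnd_apply, negExp_single_one,
    toCoeffZ_of_not_nonneg]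
  intro h
  have := h i
  simp only [Pi.zero_apply, Pi.add_apply, Pi.neg_apply, Pi.single_eq_same] at this
  lia

end Coefficients

section Border

variable [CommRing R]

theorem X_mul_mvBeta0DivXi (i : Fin n) (f : MvPolynomial (Fin n) R) (s : (Fin n → ℕ) → R) :
    MvPolynomial.X i * mvBeta0DivXi i f s = mvBeta0 f s := by
  rw [mvBeta0DivXi, mvBeta0, Finset.mul_sum]
  refine Finset.sum_congr rfl fun c hc => ?_
  have hi : Finsupp.single i 1 ≤ c := Finsupp.single_le_iff.2 ((Finset.mem_Icc.1 hc).1 i)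
  rw [mul_comm, MvPolynomial.X, MvPolynomial.monomial_mul, mul_one, tsub_add_cancel_of_le hi]

theorem coeff_mvBeta0 (f : MvPolynomial (Fin n) R) (s : (Fin n → ℕ) → R) (a : Fin n →₀ ℕ) :
    (mvBeta0 f s).coeff a =
      if a ∈ Finset.Icc oneExp (degE f) then laurentMul f (GammaZ s) fun i => (a i : ℤ) else 0 := by
  classical
  rw [mvBeta0, MvPolynomial.coeff_sum]
  simp only [MvPolynomial.coeff_monomial, Finset.sum_ite_eq', laurentMul_eq_polyMulG]

theorem toCoeffZ_mvBeta0 {f : MvPolynomial (Fin n) R} {s : (Fin n → ℕ) → R}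
    (h : ∀ i c, c i ≤ 0 → laurentMul f (GammaZ s) c = 0) :
    toCoeffZ (mvBeta0 f s) = laurentMul f (GammaZ s) := by
  funext c
  by_cases hc : 0 ≤ c
  · obtain ⟨a, rfl⟩ := exists_natCast_eq_of_nonneg hc
    rw [toCoeffZ_natCast, coeff_mvBeta0]
    refine ite_eq_left_iff.2 fun ha => ?_
    by_contra! hne
    refine ha (Finset.mem_Icc.2 ⟨fun i => ?_, fun i => ?_⟩)
    · have : ¬(a i : ℤ) ≤ 0 := fun hi => hne.symm (h i _ hi)
      change 1 ≤ a i
      lia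
    · have : (a i : ℤ) ≤ 0 + degV f i :=
        support_laurentMul_subset f (support_GammaZ_subset s) hne.symm i
      change a i ≤ degV f i
      lia
  · obtain ⟨i, hi⟩ := not_forall.1 hc
    rw [toCoeffZ_of_not_nonneg _ hc, h i c (not_le.1 hi).le]

end Border

end Laurent

theorem isRelPrime_of_forall_dvd_mul_left {M : Type*} [CommMonoidWithZero M] [IsCancelMulZero M]
    {a b d : M} (hd : d ≠ 0) (h : ∀ e, e ∣ d * a → e ∣ d * b → e ∣ d) : IsRelPrime a b := by
  intro e ha hb
  have hde : d * e ∣ d * 1 := by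
    simpa only [mul_one] using h _ (mul_dvd_mul_left d ha) (mul_dvd_mul_left d hb)
  exact isUnit_of_dvd_one ((mul_dvd_mul_iff_left hd).1 hde)

section AnnihilatorGenerator

variable [CommRing R] {n : ℕ} {s : (Fin n → ℕ) → R} {f : Fin n → R[X]} {i : Fin n}

theorem toCoeffZ_mvBeta0_embedP_mul_prod_erase (hf : ∀ j ≠ i, shiftA (embedP j (f j)) s = 0)
    {p : R[X]} (hp : shiftA (embedP i p) s = 0) :
    toCoeffZ (mvBeta0 (embedP i p * ∏ j ∈ Finset.univ.erase i, embedP j (f j)) s) =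
      laurentMul (embedP i p * ∏ j ∈ Finset.univ.erase i, embedP j (f j)) (GammaZ s) := by
  have annihilates {j : Fin n} {q : R[X]} (hq : shiftA (embedP j q) s = 0)
      (g : MvPolynomial (Fin n) R) {c : Fin n → ℤ} (hc : c j ≤ 0) :
      laurentMul (g * embedP j q) (GammaZ s) c = 0 := by
    rw [map_mul, Module.End.mul_apply]
    exact laurentMul_apply_eq_zero_of_forall_le fun c' hc' =>
      shiftA_embedP_eq_zero_iff.1 hq c' ((hc' j).trans hc)
  refine toCoeffZ_mvBeta0 fun j c hc => ?_
  rcases eq_or_ne j i with rfl | hj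
  · rw [mul_comm, annihilates hp _ hc]
  · rw [← Finset.prod_erase_mul _ _ (Finset.mem_erase.2 ⟨hj, Finset.mem_univ j⟩), ← mul_assoc,
      annihilates (hf j hj) _ hc]

theorem embedP_mul_mvBeta0DivXi_comm (hf : ∀ j ≠ i, shiftA (embedP j (f j)) s = 0) {p q : R[X]}
    (hp : shiftA (embedP i p) s = 0) (hq : shiftA (embedP i q) s = 0) :
    embedP i p * mvBeta0DivXi i (embedP i q * ∏ j ∈ Finset.univ.erase i, embedP j (f j)) s =
      embedP i q *
        mvBeta0DivXi i (embedP i p * ∏ j ∈ Finset.univ.erase i, embedP j (f j)) s := by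
  refine MvPolynomial.X_mul_cancel_left_iff.1 (toCoeffZ_injective (?_ :
    toCoeffZ (MvPolynomial.X i * _) = toCoeffZ (MvPolynomial.X i * _)))
  rw [mul_left_comm, mul_left_comm _ (embedP i q), X_mul_mvBeta0DivXi, X_mul_mvBeta0DivXi,
    toCoeffZ_mul, toCoeffZ_mul, toCoeffZ_mvBeta0_embedP_mul_prod_erase hf hp,
    toCoeffZ_mvBeta0_embedP_mul_prod_erase hf hq, ← Module.End.mul_apply, ← Module.End.mul_apply,
    ← map_mul, ← map_mul, mul_left_comm]

theorem shiftA_embedP_eq_zero_of_dvd_mvBeta0DivXi [NoZeroDivisors R] (hf0 : ∀ j ≠ i, f j ≠ 0)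
    (hf : ∀ j ≠ i, shiftA (embedP j (f j)) s = 0) {d q : R[X]} (hd0 : d ≠ 0)
    (hdq : shiftA (embedP i (d * q)) s = 0)
    (hd : embedP i d ∣
      mvBeta0DivXi i (embedP i (d * q) * ∏ j ∈ Finset.univ.erase i, embedP j (f j)) s) :
    shiftA (embedP i q) s = 0 := by
  obtain ⟨b, hb⟩ := hd
  have hβ := toCoeffZ_mvBeta0_embedP_mul_prod_erase hf hdq
  set h := ∏ j ∈ Finset.univ.erase i, embedP j (f j)
  have bddAbove_GammaZ : BddAbove (Function.support (GammaZ s)) := ⟨0, support_GammaZ_subset s⟩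
  have hmul : laurentMul (embedP i d) (laurentMul (h * embedP i q) (GammaZ s)) =
      laurentMul (embedP i d) (toCoeffZ (MvPolynomial.X i * b)) := by
    rw [← Module.End.mul_apply, ← map_mul, mul_comm h, ← mul_assoc, ← embedP_mul, ← hβ,
      ← X_mul_mvBeta0DivXi i, hb, mul_left_comm, toCoeffZ_mul]
  have hcancel : laurentMul (h * embedP i q) (GammaZ s) = toCoeffZ (MvPolynomial.X i * b) :=
    injOn_laurentMul_embedP i hd0 (bddAbove_support_laurentMul _ bddAbove_GammaZ)
      (bddAbove_support_toCoeffZ _) hmul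
  refine shiftA_embedP_eq_zero_iff.2 fun c => eq_zero_of_laurentMul_prod_embedP_eq_zero
    (Finset.notMem_erase i Finset.univ) (fun j hj => hf0 j (Finset.ne_of_mem_erase hj))
    (bddAbove_support_laurentMul _ bddAbove_GammaZ) fun c hc => ?_
  rw [← Module.End.mul_apply, ← map_mul, hcancel, toCoeffZ_X_mul_eq_zero b hc]

theorem dvd_of_shiftA_embedP_eq_zero [IsDomain R] [DecompositionMonoid (MvPolynomial (Fin n) R)]
    (hf : ∀ j ≠ i, shiftA (embedP j (f j)) s = 0) {d q : R[X]} (hd0 : d ≠ 0)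
    (hdq : shiftA (embedP i (d * q)) s = 0)
    (hd : embedP i d ∣
      mvBeta0DivXi i (embedP i (d * q) * ∏ j ∈ Finset.univ.erase i, embedP j (f j)) s)
    (hgcd : ∀ e, e ∣ embedP i (d * q) →
      e ∣ mvBeta0DivXi i (embedP i (d * q) * ∏ j ∈ Finset.univ.erase i, embedP j (f j)) s →
      e ∣ embedP i d)
    {p : R[X]} (hp : shiftA (embedP i p) s = 0) : q ∣ p := by
  obtain ⟨b, hb⟩ := hd
  have hd0' := embedP_ne_zero i hd0
  rw [hb, embedP_mul] at hgcd
  have hdvd : embedP i d * embedP i q ∣ embedP i d * (embedP i p * b) := by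
    rw [← embedP_mul, mul_left_comm, ← hb, embedP_mul_mvBeta0DivXi_comm hf hp hdq]
    exact dvd_mul_right _ _
  exact (embedP_dvd_embedP_iff i).1 <| (isRelPrime_of_forall_dvd_mul_left hd0' hgcd)
    |>.dvd_of_dvd_mul_right ((mul_dvd_mul_iff_left hd0').1 hdvd)

theorem shiftA_embedP_eq_zero_iff_dvd [IsDomain R] [DecompositionMonoid (MvPolynomial (Fin n) R)]
    (hf0 : ∀ j ≠ i, f j ≠ 0) (hf : ∀ j ≠ i, shiftA (embedP j (f j)) s = 0) {d q : R[X]}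
    (hd0 : d ≠ 0) (hdq : shiftA (embedP i (d * q)) s = 0)
    (hd : embedP i d ∣
      mvBeta0DivXi i (embedP i (d * q) * ∏ j ∈ Finset.univ.erase i, embedP j (f j)) s)
    (hgcd : ∀ e, e ∣ embedP i (d * q) →
      e ∣ mvBeta0DivXi i (embedP i (d * q) * ∏ j ∈ Finset.univ.erase i, embedP j (f j)) s →
      e ∣ embedP i d)
    (p : R[X]) : shiftA (embedP i p) s = 0 ↔ q ∣ p := by
  refine ⟨dvd_of_shiftA_embedP_eq_zero hf hd0 hdq hd hgcd, ?_⟩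
  rintro ⟨r, rfl⟩
  have hq := shiftA_embedP_eq_zero_of_dvd_mvBeta0DivXi hf0 hf hd0 hdq hd
  rw [shiftA_embedP] at hq ⊢
  rw [mul_comm, map_mul, Module.End.mul_apply, hq, map_zero]

end AnnihilatorGenerator

theorem stmt14_general [CommRing R] [IsDomain R] [UniqueFactorizationMonoid R] {n : ℕ}
    (s : (Fin n → ℕ) → R) (f : Fin n → Polynomial R) (d : Fin n → MvPolynomial (Fin n) R)
    (hf0 : ∀ i, f i ≠ 0)
    (hann : ∀ i, shiftA (embedP i (f i)) s = 0)
    (hd1 : ∀ i, d i ∣ embedP i (f i))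
    (hd2 : ∀ i, d i ∣ mvBeta0DivXi i (∏ j, embedP j (f j)) s)
    (hd3 : ∀ i, ∀ e : MvPolynomial (Fin n) R,
      e ∣ embedP i (f i) → e ∣ mvBeta0DivXi i (∏ j, embedP j (f j)) s → e ∣ d i) :
    ∀ i : Fin n, ∃ (u : Rˣ) (g : Polynomial R) (q : MvPolynomial (Fin n) R),
      embedP i (f i) = d i * q ∧
      embedP i g = MvPolynomial.C (u : R) * q ∧
      g.Monic ∧
      ∀ p : Polynomial R, shiftA (embedP i p) s = 0 ↔ g ∣ p := by
  intro i
  specialize hd1 i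
  specialize hd2 i
  specialize hd3 i
  obtain ⟨d', hd'⟩ := exists_embedP_eq_of_dvd (hf0 i) hd1
  rw [← hd', embedP_dvd_embedP_iff] at hd1
  obtain ⟨q, hdq⟩ := hd1
  obtain ⟨hd0, hq0⟩ : d' ≠ 0 ∧ q ≠ 0 := mul_ne_zero_iff.1 (hdq ▸ hf0 i)
  rw [← Finset.mul_prod_erase _ _ (Finset.mem_univ i), ← hd', hdq] at hd2 hd3
  have hdq_ann : shiftA (embedP i (d' * q)) s = 0 := hdq ▸ hann i
  have hgen (p : R[X]) : shiftA (embedP i p) s = 0 ↔ q ∣ p :=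
    shiftA_embedP_eq_zero_iff_dvd (fun j _ => hf0 j) (fun j _ => hann j) hd0 hdq_ann hd2 hd3 p
  have hu : IsUnit q.leadingCoeff :=
    isUnit_leadingCoeff_of_aeval_shiftEnd_eq_zero_iff_dvd hq0 fun p => by
      rw [← hgen, shiftA_embedP]
  obtain ⟨u, hmonic⟩ : ∃ u : Rˣ, (C (u : R) * q).Monic :=
    ⟨hu.unit⁻¹, smul_eq_C_mul (p := q) _ ▸ monic_of_isUnit_leadingCoeff_inv_smul hu⟩
  refine ⟨u, C (u : R) * q, embedP i q, ?_, embedP_C_mul i _ q, hmonic, fun p => ?_⟩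
  · rw [hdq, embedP_mul, hd']
  · rw [hgen, (isUnit_C.2 u.isUnit).mul_left_dvd]

/-- over a potential domain, with `fᵢ ∈ Ann(s) ∩ R[Xᵢ]`, `f = ∏ᵢ fᵢ` and
`dᵢ = gcd(fᵢ, β₀(f,s)/Xᵢ)`, there is a unit `uᵢ` of `R` such that `uᵢ·fᵢ/dᵢ` is the
monic generator of `Ann(s) ∩ R[Xᵢ]`. -/
theorem stmt14 [CommRing R] [IsDomain R] [UniqueFactorizationMonoid R] {n : ℕ}
    (hpot : ∀ m : ℕ,
      haveI : IsDomain (MvPowerSeries (Fin m) R) := NoZeroDivisors.to_isDomain _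
      UniqueFactorizationMonoid (MvPowerSeries (Fin m) R))
    (s : (Fin n → ℕ) → R) (f : Fin n → Polynomial R) (d : Fin n → MvPolynomial (Fin n) R)
    (hdeg : ∀ i, 1 ≤ (f i).natDegree)
    (hann : ∀ i, shiftA (embedP i (f i)) s = 0)
    (hd1 : ∀ i, d i ∣ embedP i (f i))
    (hd2 : ∀ i, d i ∣ mvBeta0DivXi i (∏ j, embedP j (f j)) s)
    (hd3 : ∀ i, ∀ e : MvPolynomial (Fin n) R,
      e ∣ embedP i (f i) → e ∣ mvBeta0DivXi i (∏ j, embedP j (f j)) s → e ∣ d i) :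
    ∀ i : Fin n, ∃ (u : Rˣ) (g : Polynomial R) (q : MvPolynomial (Fin n) R),
      embedP i (f i) = d i * q ∧
      embedP i g = MvPolynomial.C (u : R) * q ∧
      g.Monic ∧
      ∀ p : Polynomial R, shiftA (embedP i p) s = 0 ↔ g ∣ p := by
  exact stmt14_general s f d (fun i => ne_zero_of_natDegree_gt (hdeg i)) hann hd1 hd2 hd3
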